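/- Let {Y_t}_{t∈ℤ} be a stationary ergodic sequence with E|Y_t| < ∞, and let W : [−1/2, 1/2] → ℝ be a kernel function of bounded variation with ∫_{−1/2}^{1/2} W(x) dx = 1. Then Σ_{k=−M}^{M} (1/(2M+1)) W(k/(2M+1)) Y_k converges almost surely to μ = E(Y_0) as M → ∞. -/

import Mathlib

open MeasureTheory ProbabilityTheory Filter Set
open scoped ENNReal NNReal Topology

noncomputable section

/-- the two-sided iterates `T^t` of an invertible transformation. -/
def zIter {Ωs : Type*} (T : Ωs ≃ Ωs) : ℤ → Ωs → Ωs
  | Int.ofNat n => (⇑T)^[n]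
  | Int.negSucc n => (⇑T.symm)^[n + 1]


/-- running maxima of Birkhoff sums -/
def maxBirk {α : Type*} (T : α → α) (g : α → ℝ) : ℕ → α → ℝ
  | 0, _ => 0
  | n + 1, x => max 0 (g x + maxBirk T g n (T x))

lemma maxBirk_nonneg {α : Type*} (T : α → α) (g : α → ℝ) (n : ℕ) (x : α) :
    0 ≤ maxBirk T g n x := by
  cases n with
  | zero => simp [maxBirk]
  | succ n => simp [maxBirk]

lemma maxBirk_mono {α : Type*} (T : α → α) (g : α → ℝ) (n : ℕ) (x : α) :
    maxBirk T g n x ≤ maxBirk T g (n + 1) x := by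
  induction n generalizing x with
  | zero => simp [maxBirk]
  | succ n ih =>
    rw [maxBirk, maxBirk]
    exact max_le_max le_rfl (by linarith [ih (T x)])

lemma birkhoffSum_le_maxBirk {α : Type*} (T : α → α) (g : α → ℝ) (n : ℕ) (x : α) :
    birkhoffSum T g n x ≤ maxBirk T g n x := by
  induction n generalizing x with
  | zero => simp [maxBirk]
  | succ n ih =>
    rw [maxBirk, birkhoffSum_succ']
    exact le_max_of_le_right (by linarith [ih (T x)])

lemma maxBirk_measurable {α : Type*} [MeasurableSpace α] {T : α → α} {g : α → ℝ}
    (hT : Measurable T) (hg : Measurable g) (n : ℕ) : Measurable (maxBirk T g n) := by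
  induction n with
  | zero => exact measurable_const
  | succ n ih => exact measurable_const.max (hg.add (ih.comp hT))

lemma maxBirk_integrable {α : Type*} [MeasurableSpace α] {μ : Measure α} [IsProbabilityMeasure μ]
    {T : α → α} {g : α → ℝ} (hT : MeasurePreserving T μ μ) (hg : Integrable g μ) (n : ℕ) :
    Integrable (maxBirk T g n) μ := by
  induction n with
  | zero => exact integrable_const 0
  | succ n ih =>
    exact (integrable_const (0:ℝ)).sup (hg.add (hT.integrable_comp_of_integrable ih))

lemma maxBirk_bdd {α : Type*} [MeasurableSpace α] {μ : Measure α} [IsProbabilityMeasure μ]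
    {T : α → α} {g : α → ℝ} (hT : Ergodic T μ) (hgm : Measurable g) (hg : Integrable g μ)
    (hneg : ∫ x, g x ∂μ < 0) : ∀ᵐ x ∂μ, ∃ C : ℕ, ∀ n, maxBirk T g n x ≤ C := by
  set A : Set α := {x | ∀ C : ℕ, ∃ n, (C : ℝ) < maxBirk T g n x} with hA
  have hAm : MeasurableSet A := by
    have : A = ⋂ C : ℕ, ⋃ n, {x | (C : ℝ) < maxBirk T g n x} := by
      ext x; simp [hA]
    rw [this]
    exact MeasurableSet.iInter fun C => MeasurableSet.iUnion fun n =>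
      measurableSet_lt measurable_const (maxBirk_measurable hT.measurable hgm n)
  have hinv : T ⁻¹' A = A := by
    ext x
    simp only [hA, mem_preimage, mem_ofPred_eq]
    constructor
    · intro h C
      obtain ⟨C', hC'⟩ := exists_nat_ge ((C : ℝ) - g x)
      obtain ⟨n, hn⟩ := h C'
      refine ⟨n + 1, ?_⟩
      rw [maxBirk]
      exact lt_max_of_lt_right (by linarith)
    · intro h C
      obtain ⟨C', hC'⟩ := exists_nat_ge ((C : ℝ) + g x)
      obtain ⟨n, hn⟩ := h C'
      have h0 : (0:ℝ) ≤ C' := C'.cast_nonneg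
      cases n with
      | zero => simp [maxBirk] at hn; linarith
      | succ n =>
        rw [maxBirk, lt_max_iff] at hn
        rcases hn with hn | hn
        · linarith
        · exact ⟨n, by linarith⟩
  rcases hT.toPreErgodic.ae_empty_or_univ hAm hinv with h | h
  · filter_upwards [measure_eq_zero_iff_ae_notMem.1 (ae_eq_empty.1 h)] with x hx
    simpa [hA] using hx
  · exfalso
    have hint := maxBirk_integrable (g := g) hT.toMeasurePreserving hg
    have hintT : ∀ n, Integrable (fun x => maxBirk T g n (T x)) μ := fun n =>
      hT.toMeasurePreserving.integrable_comp_of_integrable (hint n)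
    have hD : ∀ n x, maxBirk T g (n+1) x - maxBirk T g n (T x)
        = max (-maxBirk T g n (T x)) (g x) := by
      intro n x
      rw [maxBirk, ← max_sub_sub_right]
      congr 1 <;> ring
    have hlim : Tendsto (fun n => ∫ x, (maxBirk T g (n+1) x - maxBirk T g n (T x)) ∂μ) atTop
        (𝓝 (∫ x, g x ∂μ)) := by
      refine tendsto_integral_of_dominated_convergence (fun x => |g x|) ?_ hg.abs ?_ ?_
      · intro n
        exact ((hint (n+1)).sub (hintT n)).aestronglyMeasurable
      · intro n
        filter_upwards with x
        rw [hD, Real.norm_eq_abs, abs_le]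
        have := maxBirk_nonneg T g n (T x)
        constructor
        · exact le_max_of_le_right (neg_abs_le _)
        · exact max_le (by linarith [abs_nonneg (g x)]) (le_abs_self _)
      · have hu : ∀ᵐ x ∂μ, x ∈ A := by
          filter_upwards [h] with x hx
          exact (iff_of_eq hx).2 trivial
        filter_upwards [hu] with x hx
        rw [← hinv] at hx
        obtain ⟨C, hC⟩ := exists_nat_ge (- g x)
        obtain ⟨n, hn⟩ := hx C
        refine tendsto_const_nhds.congr' ?_
        filter_upwards [eventually_ge_atTop n] with m hm
        have := monotone_nat_of_le_succ (fun n => maxBirk_mono T g n (T x)) hm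
        rw [hD, max_eq_right]
        have h3 : maxBirk T g n (T x) ≤ maxBirk T g m (T x) := this
        linarith
    have := ge_of_tendsto' hlim (b := 0) (fun n => by
      rw [integral_sub (hint (n+1)) (hintT n)]
      have e : ∫ x, maxBirk T g n (T x) ∂μ = ∫ x, maxBirk T g n x ∂μ := by
        have := integral_map (μ := μ) hT.measurable.aemeasurable (f := maxBirk T g n)
          (maxBirk_measurable hT.measurable hgm n).aestronglyMeasurable
        rw [hT.toMeasurePreserving.map_eq] at this
        exact this.symm
      rw [e, sub_nonneg]
      exact integral_mono (hint n) (hint (n+1)) (fun x => maxBirk_mono T g n x))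
    linarith

lemma birk_upper {α : Type*} [MeasurableSpace α] {μ : Measure α} [IsProbabilityMeasure μ]
    {T : α → α} {f : α → ℝ} (hT : Ergodic T μ) (hfm : Measurable f) (hf : Integrable f μ)
    (c : ℝ) (hc : ∫ x, f x ∂μ < c) :
    ∀ᵐ x ∂μ, ∃ C : ℕ, ∀ n : ℕ, birkhoffSum T f n x ≤ n * c + C := by
  have h := maxBirk_bdd (g := fun x => f x - c) hT (hfm.sub_const c) (hf.sub (integrable_const c))
    (by rw [integral_sub hf (integrable_const c)]; simpa using hc)
  filter_upwards [h] with x ⟨C, hC⟩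
  refine ⟨C, fun n => ?_⟩
  have h1 := (birkhoffSum_le_maxBirk T _ n x).trans (hC n)
  simp [birkhoffSum] at h1 ⊢
  linarith

lemma birk_meas {α : Type*} [MeasurableSpace α] {μ : Measure α} [IsProbabilityMeasure μ]
    {T : α → α} {f : α → ℝ} (hT : Ergodic T μ) (hfm : Measurable f) (hf : Integrable f μ) :
    ∀ᵐ x ∂μ, Tendsto (fun n : ℕ => birkhoffSum T f n x / n) atTop (𝓝 (∫ x, f x ∂μ)) := by
  set c := ∫ x, f x ∂μ with hc
  have hpos : ∀ j : ℕ, 0 < 1 / ((j:ℝ) + 1) := fun j => by positivity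
  have h1 : ∀ᵐ x ∂μ, ∀ j : ℕ, ∃ C : ℕ, ∀ n : ℕ,
      birkhoffSum T f n x ≤ n * (c + 1 / ((j:ℝ) + 1)) + C :=
    ae_all_iff.2 fun j => birk_upper hT hfm hf _ (by linarith [hpos j])
  have h2 : ∀ᵐ x ∂μ, ∀ j : ℕ, ∃ C : ℕ, ∀ n : ℕ,
      birkhoffSum T (fun x => - f x) n x ≤ n * (-c + 1 / ((j:ℝ) + 1)) + C :=
    ae_all_iff.2 fun j => birk_upper hT hfm.neg hf.neg _
      (by rw [integral_neg']; linarith [hpos j])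
  filter_upwards [h1, h2] with x h1 h2
  rw [Metric.tendsto_atTop]
  intro ε hε
  obtain ⟨j, hj⟩ := exists_nat_one_div_lt (half_pos hε)
  obtain ⟨C1, hC1⟩ := h1 j
  obtain ⟨C2, hC2⟩ := h2 j
  obtain ⟨N, hN⟩ := exists_nat_gt ((C1 + C2 + 1) * 2 / ε)
  refine ⟨N + 1, fun n hn => ?_⟩
  have hn' : (N:ℝ) + 1 ≤ n := by exact_mod_cast hn
  have hnp : (0:ℝ) < n := by linarith [(Nat.cast_nonneg N : (0:ℝ) ≤ N)]
  have hb : ((C1:ℝ) + C2 + 1) * 2 < n * ε := by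
    rw [div_lt_iff₀ hε] at hN
    nlinarith
  have p1 : (0:ℝ) ≤ C1 := C1.cast_nonneg
  have p2 : (0:ℝ) ≤ C2 := C2.cast_nonneg
  have q1 := hC1 n
  have q2 := hC2 n
  have e : birkhoffSum T (fun x => - f x) n x = - birkhoffSum T f n x := by
    simp [birkhoffSum]
  rw [e] at q2
  have hj' : (n:ℝ) * (1 / ((j:ℝ) + 1)) < n * (ε / 2) := by gcongr
  rw [Real.dist_eq, abs_lt]
  constructor
  · rw [lt_sub_iff_add_lt, lt_div_iff₀ hnp]
    nlinarith
  · rw [sub_lt_iff_lt_add, div_lt_iff₀ hnp]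
    nlinarith

lemma birk {α : Type*} [MeasurableSpace α] {μ : Measure α} [IsProbabilityMeasure μ]
    {T : α → α} {f : α → ℝ} (hT : Ergodic T μ) (hf : Integrable f μ) :
    ∀ᵐ x ∂μ, Tendsto (fun n : ℕ => (∑ k ∈ Finset.range n, f (T^[k] x)) / n) atTop
      (𝓝 (∫ x, f x ∂μ)) := by
  have hae := hf.1.ae_eq_mk
  have hm := birk_meas hT hf.1.stronglyMeasurable_mk.measurable (hf.congr hae)
  rw [← integral_congr_ae hae] at hm
  have hs : ∀ᵐ x ∂μ, ∀ n, birkhoffSum T f n x = birkhoffSum T (hf.1.mk f) n x :=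
    ae_all_iff.2 fun n => hT.quasiMeasurePreserving.birkhoffSum_ae_eq_of_ae_eq hae n
  filter_upwards [hm, hs] with x hx hs
  refine hx.congr fun n => ?_
  rw [← hs]; rfl

lemma erg_symm {α : Type*} [MeasurableSpace α] {μ : Measure α} (T : α ≃ α) (hT : Ergodic T μ)
    (hs : MeasurePreserving T.symm μ μ) : Ergodic T.symm μ := by
  refine ⟨hs, ⟨fun s hm h => hT.toPreErgodic.aeconst_set hm ?_⟩⟩
  conv_lhs => rw [← h]
  ext x; simp

lemma grid_mem {M k : ℕ} (hk : k ≤ M) : (k:ℝ) / (2 * (M:ℝ) + 1) ∈ Icc (0:ℝ) (1/2) := by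
  have h : (k:ℝ) ≤ M := by exact_mod_cast hk
  have hp : (0:ℝ) < 2 * (M:ℝ) + 1 := by positivity
  refine ⟨by positivity, ?_⟩
  rw [div_le_iff₀ hp]; linarith

lemma mono_bound {p : ℝ → ℝ} (hp : MonotoneOn p (Icc 0 (1/2))) {x : ℝ} (hx : x ∈ Icc (0:ℝ) (1/2)) :
    |p x| ≤ |p 0| + |p (1/2)| := by
  have h1 := hp (by norm_num : (0:ℝ) ∈ Icc (0:ℝ) (1/2)) hx hx.1
  have h2 := hp hx (by norm_num : (1/2:ℝ) ∈ Icc (0:ℝ) (1/2)) hx.2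
  rw [abs_le]
  have a1 := neg_abs_le (p 0)
  have a2 := abs_nonneg (p 0)
  have a3 := le_abs_self (p (1/2))
  have a4 := abs_nonneg (p (1/2))
  constructor <;> linarith

lemma tendsto_inv_N (C : ℝ) : Tendsto (fun M : ℕ => C / (2 * (M:ℝ) + 1)) atTop (𝓝 0) := by
  refine Tendsto.div_atTop tendsto_const_nhds ?_
  refine tendsto_atTop_add_const_right _ _ ?_
  exact (tendsto_natCast_atTop_atTop).const_mul_atTop (by norm_num)

lemma riemann {p : ℝ → ℝ} (hp : MonotoneOn p (Icc 0 (1/2))) :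
    Tendsto (fun M : ℕ => ∑ k ∈ Finset.range (M+1),
      (1 / (2 * (M:ℝ) + 1)) * p ((k:ℝ) / (2 * (M:ℝ) + 1))) atTop
      (𝓝 (∫ x in (0:ℝ)..(1/2), p x)) := by
  set K := |p 0| + |p (1/2)| with hK
  have hI : ∀ a ∈ Icc (0:ℝ) (1/2), ∀ b ∈ Icc (0:ℝ) (1/2), IntervalIntegrable p volume a b := by
    intro a ha b hb
    exact (hp.mono (uIcc_subset_Icc ha hb)).intervalIntegrable
  rw [tendsto_iff_dist_tendsto_zero]
  refine squeeze_zero (fun _ => dist_nonneg) ?_ (tendsto_inv_N (2 * K))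
  intro M
  set N : ℝ := 2 * (M:ℝ) + 1 with hN
  have hNp : 0 < N := by positivity
  have hm : (M:ℝ) / N ∈ Icc (0:ℝ) (1/2) := grid_mem le_rfl
  have h0 : (0:ℝ) ∈ Icc (0:ℝ) (1/2) := by norm_num
  have h12 : (1/2:ℝ) ∈ Icc (0:ℝ) (1/2) := by norm_num
  have hmono : MonotoneOn (fun x => p (x / N)) (Icc (0:ℝ) (0 + (M:ℝ))) := by
    have hmem : ∀ x ∈ Icc (0:ℝ) (0 + (M:ℝ)), x / N ∈ Icc (0:ℝ) (1/2) := by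
      intro x hx
      rw [zero_add] at hx
      refine ⟨div_nonneg hx.1 hNp.le, le_trans ?_ hm.2⟩
      exact div_le_div_of_nonneg_right hx.2 hNp.le
    intro x hx y hy hxy
    exact hp (hmem x hx) (hmem y hy) (div_le_div_of_nonneg_right hxy hNp.le)
  have l1 := hmono.sum_le_integral
  have l2 := hmono.integral_le_sum
  rw [intervalIntegral.integral_comp_div _ hNp.ne'] at l1 l2
  simp only [zero_add, zero_div, smul_eq_mul] at l1 l2
  have e1 := Finset.sum_range_succ (fun k : ℕ => p ((k:ℝ) / N)) M
  have e2 := Finset.sum_range_succ' (fun k : ℕ => p ((k:ℝ) / N)) M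
  simp only [Nat.cast_zero, zero_div] at e2
  have split := intervalIntegral.integral_add_adjacent_intervals (hI 0 h0 _ hm) (hI _ hm _ h12)
  have hr : |∫ x in (M:ℝ)/N..(1/2), p x| ≤ K * |1/2 - (M:ℝ)/N| := by
    rw [← Real.norm_eq_abs (∫ x in (M:ℝ)/N..(1/2), p x)]
    refine intervalIntegral.norm_integral_le_of_norm_le_const (fun x hx => ?_)
    rw [uIoc_of_le hm.2] at hx
    exact mono_bound hp ⟨hm.1.trans hx.1.le, hx.2⟩
  have hd : |1/2 - (M:ℝ)/N| = 1 / 2 / N := by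
    rw [abs_of_nonneg (by linarith [hm.2])]
    rw [hN] at hNp ⊢
    field_simp
    ring
  rw [hd] at hr
  have b1 := mono_bound hp hm
  have b0 := mono_bound hp h0
  rw [← hK] at b1 b0
  rw [abs_le] at b1 b0 hr
  rw [← Finset.mul_sum, Real.dist_eq, ← split]
  set S := ∑ k ∈ Finset.range (M+1), p ((k:ℝ) / N) with hS
  set I := ∫ x in (0:ℝ)..(M:ℝ)/N, p x with hII
  set J := ∫ x in (M:ℝ)/N..(1/2), p x with hJ
  have hK0 : 0 ≤ K := by positivity
  have key : |S - N * I| ≤ K := by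
    rw [abs_le]; constructor <;> linarith
  have : 1 / N * S - (I + J) = (S - N * I) / N - J := by field_simp; ring
  rw [this]
  calc |(S - N * I) / N - J| ≤ |(S - N * I) / N| + |J| := abs_sub _ _
    _ ≤ K / N + K * (1 / 2 / N) := by
      rw [abs_div, abs_of_pos hNp]
      have := abs_le.2 hr
      gcongr
    _ ≤ 2 * K / N := by
      rw [show 2 * K / N = K / N + K * (1 / N) by ring]
      gcongr
      norm_num

lemma weighted_zero {b : ℕ → ℝ} {p : ℝ → ℝ} (hp : MonotoneOn p (Icc 0 (1/2)))
    (hb : Tendsto (fun n : ℕ => (∑ k ∈ Finset.range n, b k) / n) atTop (𝓝 0)) :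
    Tendsto (fun M : ℕ => ∑ k ∈ Finset.range (M+1),
      (1 / (2 * (M:ℝ) + 1)) * p ((k:ℝ) / (2 * (M:ℝ) + 1)) * b k) atTop (𝓝 0) := by
  set K := |p 0| + |p (1/2)| with hK
  have hK0 : 0 ≤ K := by positivity
  set B : ℕ → ℝ := fun n => ∑ k ∈ Finset.range n, b k with hB
  have hCδ : ∀ δ > 0, ∃ C, 0 ≤ C ∧ ∀ n : ℕ, |B n| ≤ C + δ * n := by
    intro δ hδ
    obtain ⟨N0, hN0⟩ := Metric.tendsto_atTop.1 hb δ hδ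
    refine ⟨∑ k ∈ Finset.range (N0+1), |B k|, Finset.sum_nonneg fun _ _ => abs_nonneg _, ?_⟩
    intro n
    by_cases hn : n < N0 + 1
    · have := Finset.single_le_sum (f := fun k => |B k|) (fun _ _ => abs_nonneg _)
        (Finset.mem_range.2 hn)
      have h2 : 0 ≤ δ * n := by positivity
      have h3 : |B n| ≤ ∑ k ∈ Finset.range (N0+1), |B k| := this
      linarith
    · have h1 := hN0 n (by omega)
      have hnp : (0:ℝ) < n := by exact_mod_cast (by omega : 0 < n)
      rw [Real.dist_eq, sub_zero, abs_div, abs_of_pos hnp, div_lt_iff₀ hnp] at h1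
      have h2 : 0 ≤ ∑ k ∈ Finset.range (N0+1), |B k| := Finset.sum_nonneg fun _ _ => abs_nonneg _
      simp only [hB] at h1 h2 ⊢
      linarith
  have main : ∀ δ > 0, ∀ C, 0 ≤ C → (∀ n : ℕ, |B n| ≤ C + δ * n) → ∀ M : ℕ,
      |∑ k ∈ Finset.range (M+1),
      (1 / (2 * (M:ℝ) + 1)) * p ((k:ℝ) / (2 * (M:ℝ) + 1)) * b k| ≤
      3 * K * C / (2 * (M:ℝ) + 1) + 3 * K * δ := by
    intro δ hδ C hC hBC M
    set N : ℝ := 2 * (M:ℝ) + 1 with hN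
    have hNp : 0 < N := by positivity
    set u : ℕ → ℝ := fun k => p ((k:ℝ) / N) with hu
    have habel := Finset.sum_range_by_parts u b (M+1)
    simp only [smul_eq_mul, Nat.add_sub_cancel] at habel
    set D := C + δ * ((M:ℝ) + 1) with hD
    have hBD : ∀ k ≤ M + 1, |B k| ≤ D := by
      intro k hk
      have : (k:ℝ) ≤ (M:ℝ) + 1 := by exact_mod_cast hk
      have := hBC k
      rw [hD]
      nlinarith
    have hD0 : 0 ≤ D := by positivity
    have hmem : ∀ k ≤ M, (k:ℝ) / N ∈ Icc (0:ℝ) (1/2) := fun k hk => grid_mem hk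
    have humono : ∀ k < M, 0 ≤ u (k+1) - u k := by
      intro k hk
      rw [sub_nonneg]
      refine hp (hmem k hk.le) (hmem (k+1) hk) ?_
      push_cast
      gcongr
      linarith
    have hub : ∀ k ≤ M, |u k| ≤ K := fun k hk => mono_bound hp (hmem k hk)
    have hsum : |∑ k ∈ Finset.range (M+1), u k * b k| ≤ 3 * K * D := by
      rw [habel]
      have t1 : |u M * ∑ i ∈ Finset.range (M+1), b i| ≤ K * D := by
        rw [abs_mul]
        exact mul_le_mul (hub M le_rfl) (hBD (M+1) le_rfl) (abs_nonneg _) hK0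
      have t2 : |∑ i ∈ Finset.range M, (u (i+1) - u i) * ∑ j ∈ Finset.range (i+1), b j|
          ≤ (u M - u 0) * D := by
        rw [← Finset.sum_range_sub, Finset.sum_mul]
        refine (Finset.abs_sum_le_sum_abs _ _).trans (Finset.sum_le_sum fun i hi => ?_)
        have hi' := Finset.mem_range.1 hi
        rw [abs_mul, abs_of_nonneg (humono i hi')]
        exact mul_le_mul_of_nonneg_left (hBD (i+1) (by omega)) (humono i hi')
      have t3 : u M - u 0 ≤ 2 * K := by
        have h1 := (abs_le.1 (hub M le_rfl)).2
        have h2 := (abs_le.1 (hub 0 (Nat.zero_le _))).1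
        linarith
      have t4 := mul_le_mul_of_nonneg_right t3 hD0
      refine (abs_sub _ _).trans ?_
      linarith
    have : ∑ k ∈ Finset.range (M+1), (1 / N) * p ((k:ℝ) / N) * b k
        = (∑ k ∈ Finset.range (M+1), u k * b k) / N := by
      rw [Finset.sum_div]
      refine Finset.sum_congr rfl fun k _ => ?_
      simp only [hu]; ring
    rw [this, abs_div, abs_of_pos hNp, div_le_iff₀ hNp]
    refine hsum.trans ?_
    have e : (3 * K * C / N + 3 * K * δ) * N = 3 * K * (C + δ * N) := by field_simp
    rw [e, hD]
    have : (M:ℝ) + 1 ≤ N := by rw [hN]; linarith [(Nat.cast_nonneg M : (0:ℝ) ≤ M)]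
    gcongr
  rw [Metric.tendsto_atTop]
  intro ε hε
  set δ := ε / (2 * (3 * K + 1)) with hδ
  have hδp : 0 < δ := by positivity
  obtain ⟨C, hC, hBC⟩ := hCδ δ hδp
  obtain ⟨M0, hM0⟩ := Metric.tendsto_atTop.1 (tendsto_inv_N (3 * K * C)) (ε/2) (half_pos hε)
  refine ⟨M0, fun M hM => ?_⟩
  have h1 := hM0 M hM
  rw [Real.dist_eq, sub_zero] at h1 ⊢
  have h2 := main δ hδp C hC hBC M
  have h3 : 3 * K * δ ≤ ε / 2 := by
    have : (3 * K + 1) * δ = ε / 2 := by rw [hδ]; field_simp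
    linarith
  linarith [le_abs_self (3 * K * C / (2 * (M:ℝ) + 1))]

lemma half_mono {a : ℕ → ℝ} {m : ℝ} {p : ℝ → ℝ} (hp : MonotoneOn p (Icc 0 (1/2)))
    (ha : Tendsto (fun n : ℕ => (∑ k ∈ Finset.range n, a k) / n) atTop (𝓝 m)) :
    Tendsto (fun M : ℕ => ∑ k ∈ Finset.range (M+1),
      (1 / (2 * (M:ℝ) + 1)) * p ((k:ℝ) / (2 * (M:ℝ) + 1)) * a k) atTop
      (𝓝 ((∫ x in (0:ℝ)..(1/2), p x) * m)) := by
  have hb : Tendsto (fun n : ℕ => (∑ k ∈ Finset.range n, (a k - m)) / n) atTop (𝓝 0) := by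
    have := ha.sub_const m
    rw [sub_self] at this
    refine this.congr' ?_
    filter_upwards [eventually_gt_atTop 0] with n hn
    have : (n:ℝ) ≠ 0 := by positivity
    rw [Finset.sum_sub_distrib]
    simp
    field_simp
  have := (weighted_zero hp hb).add ((riemann hp).mul_const m)
  rw [zero_add] at this
  refine this.congr fun M => ?_
  rw [Finset.sum_mul, ← Finset.sum_add_distrib]
  refine Finset.sum_congr rfl fun k _ => ?_
  ring

lemma two_sided {a : ℤ → ℝ} {m : ℝ} {p : ℝ → ℝ} (hp : MonotoneOn p (Icc (-(1:ℝ)/2) (1/2)))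
    (ha : Tendsto (fun n : ℕ => (∑ k ∈ Finset.range n, a k) / n) atTop (𝓝 m))
    (ha' : Tendsto (fun n : ℕ => (∑ k ∈ Finset.range n, a (-(k:ℤ))) / n) atTop (𝓝 m)) :
    Tendsto (fun M : ℕ => ∑ k ∈ Finset.Icc (-(M : ℤ)) (M : ℤ),
          (1 / (2 * (M : ℝ) + 1)) * p ((k : ℝ) / (2 * (M : ℝ) + 1)) * a k) atTop
      (𝓝 ((∫ x in Icc (-(1:ℝ)/2) (1/2), p x) * m)) := by
  have hp1 : MonotoneOn p (Icc 0 (1/2)) := hp.mono (Icc_subset_Icc (by norm_num) le_rfl)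
  have hp2 : MonotoneOn (fun x => - p (-x)) (Icc 0 (1/2)) := by
    intro x hx y hy hxy
    have := hp (a := -y) (b := -x) ⟨by linarith [hy.2], by linarith [hy.1]⟩
      ⟨by linarith [hx.2], by linarith [hx.1]⟩ (by linarith)
    simpa using this
  have h1 := half_mono hp1 ha
  have h2 := (half_mono hp2 ha').neg
  have h3 := tendsto_inv_N (p 0 * a 0)
  have hlim := (h1.add h2).sub h3
  have hint : (∫ x in Icc (-(1:ℝ)/2) (1/2), p x)
      = (∫ x in (0:ℝ)..(1/2), p x) + ∫ x in (0:ℝ)..(1/2), p (-x) := by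
    rw [integral_Icc_eq_integral_Ioc, ← intervalIntegral.integral_of_le (by norm_num),
      intervalIntegral.integral_comp_neg, neg_zero, add_comm, ← neg_div]
    refine (intervalIntegral.integral_add_adjacent_intervals ?_ ?_).symm
    · exact (hp.mono (uIcc_subset_Icc (by norm_num) (by norm_num))).intervalIntegrable
    · exact (hp.mono (uIcc_subset_Icc (by norm_num) (by norm_num))).intervalIntegrable
  have e : (∫ x in Icc (-(1:ℝ)/2) (1/2), p x) * m = (∫ x in (0:ℝ)..(1/2), p x) * m
      + -((∫ x in (0:ℝ)..(1/2), - p (-x)) * m) - 0 := by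
    rw [hint, intervalIntegral.integral_neg]; ring
  rw [e]
  refine hlim.congr fun M => ?_
  have hs : ∀ (F : ℤ → ℝ) (M : ℕ), ∑ k ∈ Finset.Icc (-(M:ℤ)) M, F k
      = ∑ k ∈ Finset.range (M+1), F k + ∑ k ∈ Finset.range (M+1), F (-(k:ℤ)) - F 0 := by
    intro F M
    induction M with
    | zero => simp
    | succ n ih =>
      rw [Finset.sum_range_succ _ (n+1), Finset.sum_range_succ _ (n+1)]
      have : Finset.Icc (-((n+1:ℕ):ℤ)) ((n+1:ℕ):ℤ)
          = insert (-((n+1:ℕ):ℤ)) (insert ((n+1:ℕ):ℤ) (Finset.Icc (-(n:ℤ)) n)) := by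
        ext k
        simp only [Finset.mem_Icc, Finset.mem_insert]
        omega
      rw [this, Finset.sum_insert, Finset.sum_insert, ih]
      · ring
      · simp
      · simp only [Finset.mem_Icc, Finset.mem_insert]
        omega
  rw [hs]
  congr 1
  · congr 1
    rw [← Finset.sum_neg_distrib]
    refine Finset.sum_congr rfl fun k _ => ?_
    push_cast
    rw [neg_div]
    ring
  · simp
    ring

theorem det {a : ℤ → ℝ} {m : ℝ} {W : ℝ → ℝ}
    (hW : BoundedVariationOn W (Set.Icc (-(1 : ℝ) / 2) (1 / 2)))
    (ha : Tendsto (fun n : ℕ => (∑ k ∈ Finset.range n, a k) / n) atTop (𝓝 m))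
    (ha' : Tendsto (fun n : ℕ => (∑ k ∈ Finset.range n, a (-(k:ℤ))) / n) atTop (𝓝 m)) :
    Tendsto (fun M : ℕ => ∑ k ∈ Finset.Icc (-(M : ℤ)) (M : ℤ),
          (1 / (2 * (M : ℝ) + 1)) * W ((k : ℝ) / (2 * (M : ℝ) + 1)) * a k) atTop
      (𝓝 ((∫ x in Icc (-(1:ℝ)/2) (1/2), W x) * m)) := by
  obtain ⟨p, q, hp, hq, rfl⟩ := hW.locallyBoundedVariationOn.exists_monotoneOn_sub_monotoneOn
  have := (two_sided hp ha ha').sub (two_sided hq ha ha')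
  rw [← sub_mul, ← integral_sub] at this
  · refine this.congr fun M => ?_
    rw [← Finset.sum_sub_distrib]
    refine Finset.sum_congr rfl fun k _ => ?_
    simp only [Pi.sub_apply]; ring
  · exact hp.integrableOn_isCompact isCompact_Icc
  · exact hq.integrableOn_isCompact isCompact_Icc

/-- Lemma A.1: if `{Y_t}` is a stationary ergodic sequence with `E|Y_t| < ∞`
(realized as `Y_t = f ∘ T^t` for an invertible ergodic measure-preserving `T` and an
integrable `f`) and `W : [−1/2,1/2] → ℝ` is a kernel of bounded variation with
`∫ W = 1`, then `Σ_{k=−M}^{M} (1/(2M+1)) W(k/(2M+1)) Y_k → E(Y_0)` almost surely. -/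
theorem stmt_7 {Ωs : Type*} [MeasureSpace Ωs] [IsProbabilityMeasure (ℙ : Measure Ωs)]
    (T : Ωs ≃ Ωs) (hT : Ergodic (⇑T) ℙ) (hTsymm : MeasurePreserving (⇑T.symm) ℙ ℙ)
    (f : Ωs → ℝ) (hf : Integrable f ℙ)
    (Y : ℤ → Ωs → ℝ) (hY : ∀ t ω, Y t ω = f (zIter T t ω))
    (W : ℝ → ℝ) (hWbv : BoundedVariationOn W (Set.Icc (-(1 : ℝ) / 2) (1 / 2)))
    (hWsupp : ∀ x ∉ Set.Icc (-(1 : ℝ) / 2) (1 / 2), W x = 0)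
    (hWint : ∫ x in Set.Icc (-(1 : ℝ) / 2) (1 / 2), W x = 1) :
    ∀ᵐ ω ∂ℙ, Tendsto (fun M : ℕ =>
        ∑ k ∈ Finset.Icc (-(M : ℤ)) (M : ℤ),
          (1 / (2 * (M : ℝ) + 1)) * W ((k : ℝ) / (2 * (M : ℝ) + 1)) * Y k ω)
      atTop (𝓝 (∫ ω, f ω ∂ℙ)) := by
  have hr := birk hT hf
  have hl := birk (erg_symm T hT hTsymm) hf
  filter_upwards [hr, hl] with ω hr hl
  have key := det (a := fun k => Y k ω) (m := ∫ ω, f ω ∂ℙ) hWbv ?_ ?_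
  · rw [hWint, one_mul] at key
    exact key
  · refine hr.congr fun n => ?_
    congr 1
    refine Finset.sum_congr rfl fun k _ => ?_
    rw [hY]; rfl
  · refine hl.congr fun n => ?_
    congr 1
    refine Finset.sum_congr rfl fun k _ => ?_
    rw [hY]
    cases k with
    | zero => rfl
    | succ k => rfl


end
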